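/- Let k ≥ 1 and 0 ≤ l ≤ 2k−1 be integers and G = (V, E) a multigraph. Then any two sub-multisets E₁, E₂ of E that are maximal with respect to inclusion among sub-multisets E' for which (V, E') is (k,l)-sparse have the same cardinality. Consequently, if the edges of E are added one at a time starting from (V, ∅), discarding an edge exactly when its addition creates a (k,l)-redundant subgraph, the number of discarded edges is independent of the order of addition and equals the minimum cardinality of a set F of edges such that (V, E ∖ F) is (k,l)-sparse. -/

import Mathlib

/-!  Multigraphs: finite vertex set, finite multiset of edges (unordered pairs of
distinct vertices, parallel edges allowed, loops excluded). -/

/-- A multigraph on vertex type `V`: a finite set of vertices together with a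
finite multiset of edges (unordered pairs of vertices). -/
structure MG (V : Type*) where
  verts : Finset V
  edges : Multiset (Sym2 V)

namespace MG

variable {V : Type*} [DecidableEq V]

/-- Well-formedness: no loops, and every edge joins vertices of the graph. -/
def WF (G : MG V) : Prop :=
  (∀ e ∈ G.edges, ¬ e.IsDiag) ∧ (∀ e ∈ G.edges, e ∈ G.verts.sym2)

/-- `G'` is a subgraph of `G`: vertices a subset, edges a sub-multiset, and all
edges of `G'` join vertices of `G'`. -/
def IsSubgraph (G' G : MG V) : Prop :=
  G'.verts ⊆ G.verts ∧ G'.edges ≤ G.edges ∧ ∀ e ∈ G'.edges, e ∈ G'.verts.sym2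

/-- `(k,l)`-sparsity: every subgraph with `n > 1` vertices and `m` edges
satisfies `m ≤ k n - l`. -/
def Sparse (k l : ℤ) (G : MG V) : Prop :=
  ∀ G' : MG V, G'.IsSubgraph G → 1 < G'.verts.card →
    (Multiset.card G'.edges : ℤ) ≤ k * G'.verts.card - l

/-- `(k,l)`-redundant: not `(k,l)`-sparse. -/
def Redundant (k l : ℤ) (G : MG V) : Prop := ¬ Sparse k l G

/-- `(k,l)`-tight: sparse with exactly `k|V| - l` edges. -/
def Tight (k l : ℤ) (G : MG V) : Prop :=
  Sparse k l G ∧ (Multiset.card G.edges : ℤ) = k * G.verts.card - l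

/-- `A` and `B` are `(k,l)`-rigidly connected in `G` if some `(k,l)`-tight
subgraph of `G` contains both. -/
def RigidlyConnected (k l : ℤ) (G : MG V) (A B : V) : Prop :=
  ∃ T : MG V, T.IsSubgraph G ∧ Tight k l T ∧ A ∈ T.verts ∧ B ∈ T.verts

/-- `r_AB(H)`: the maximum of `|E_h| - k |V_h|` over all `(k,l)`-sparse
subgraphs `h` of `H` containing both `A` and `B`. -/
noncomputable def rAB (k l : ℤ) (H : MG V) (A B : V) : ℤ :=
  sSup {z : ℤ | ∃ h : MG V, h.IsSubgraph H ∧ Sparse k l h ∧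
    A ∈ h.verts ∧ B ∈ h.verts ∧ z = (Multiset.card h.edges : ℤ) - k * h.verts.card}

/-- `M_AB(H) = max (r_AB(H) + 2k, 0)`. -/
noncomputable def MAB (k l : ℤ) (H : MG V) (A B : V) : ℤ :=
  max (rAB k l H A B + 2 * k) 0

/-- The subgraph of `G` induced by a set `S` of vertices. -/
def induced (G : MG V) (S : Finset V) : MG V :=
  ⟨S, G.edges.filter (· ∈ S.sym2)⟩

/-- The intersection of `g` with the subgraph induced by `VH`: vertices
`g.verts ∩ VH` and the edges of `g` with both endpoints in `VH`. -/
def inter (g : MG V) (VH : Finset V) : MG V :=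
  ⟨g.verts ∩ VH, g.edges.filter (· ∈ VH.sym2)⟩

/-- The renormalizability condition: every edge of `G` with exactly one
endpoint in `VH` is incident to `A` or `B`. -/
def RenormCond (G : MG V) (VH : Finset V) (A B : V) : Prop :=
  ∀ e ∈ G.edges, (∃ v ∈ e, v ∈ VH) → (∃ v ∈ e, v ∉ VH) → (A ∈ e ∨ B ∈ e)

/-- The renormalized graph `R(G)`: delete all edges with both endpoints in
`VH`, delete the vertices of `VH` other than `A, B`, and insert
`M_AB(H)` parallel edges between `A` and `B`, where `H` is the subgraph
induced by `VH`. -/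
noncomputable def renormG (k l : ℤ) (G : MG V) (VH : Finset V) (A B : V) : MG V :=
  ⟨(G.verts \ VH) ∪ {A, B},
   G.edges.filter (fun e => e ∉ VH.sym2) +
     Multiset.replicate (MAB k l (G.induced VH) A B).toNat s(A, B)⟩

/-- Renormalization of a subgraph `g` of `G`: the part of `g` outside `VH` is
left unchanged, and its intersection `h` with the subgraph induced by `VH` is
replaced by `M_AB(h)` parallel `A`–`B` edges if both `A` and `B` belong to `g`,
and by no edges otherwise. -/
noncomputable def renormSub (k l : ℤ) (g : MG V) (VH : Finset V) (A B : V) : MG V :=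
  ⟨(g.verts \ VH) ∪ (g.verts ∩ {A, B}),
   g.edges.filter (fun e => e ∉ VH.sym2) +
     (if A ∈ g.verts ∧ B ∈ g.verts then
        Multiset.replicate (MAB k l (g.inter VH) A B).toNat s(A, B)
      else 0)⟩

/-- The maximum cardinality of a sub-multiset `E'` of the edges of `G` such
that `(V, E')` is `(k,l)`-sparse. -/
noncomputable def maxSparseCard (k l : ℤ) (G : MG V) : ℕ :=
  sSup {n : ℕ | ∃ E' : Multiset (Sym2 V), E' ≤ G.edges ∧
    Sparse k l (⟨G.verts, E'⟩ : MG V) ∧ Multiset.card E' = n}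

/-- The number of `(k,l)`-redundant edges of `G`. -/
noncomputable def nred (k l : ℤ) (G : MG V) : ℕ :=
  Multiset.card G.edges - maxSparseCard k l G

/-- Connectivity: any two vertices are joined by a path of edges. -/
def Connected (G : MG V) : Prop :=
  ∀ a ∈ G.verts, ∀ b ∈ G.verts,
    Relation.ReflTransGen (fun x y => s(x, y) ∈ G.edges) a b

end MG

/- The sequential edge-addition process: starting from no edges, add the edges of the
list `L` one at a time, discarding an edge exactly when its addition destroys
`(k,l)`-sparsity (i.e. creates a `(k,l)`-redundant subgraph). -/
open Classical in
noncomputable def addEdges {V : Type*} [DecidableEq V] (k l : ℤ) (Vs : Finset V)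
    (L : List (Sym2 V)) : Multiset (Sym2 V) :=
  L.foldl (fun acc e =>
    if MG.Sparse k l (⟨Vs, e ::ₘ acc⟩ : MG V) then e ::ₘ acc else acc) 0

/-!
The edge multisets `E'` for which `(V, E')` is sparse are the independent sets of a matroid, whose
rank has a min-max description through tight vertex sets, those `S` that span exactly `k |S| - l`
edges. The number of edges spanned by `S` is supermodular in `S`, so two tight sets sharing two
vertices have a tight union. Hence the maximal tight sets of a sparse edge multiset `B` pairwise
share at most one vertex, and an edge that is not a loop lies in at most one of them. If no
further edge of `E` can be added to `B`, then every edge of `E` outside `B` lies in a maximal tight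
set. A sparse `E' ≤ E` cannot have more edges than `B` inside any of these tight sets, nor
outside all of them, so it has at most as many edges as `B`.
-/

namespace MG

section Counting

variable {α ι : Type*}

lemma card_eq_countP_add_sum_countP (F : Finset ι) (p : ι → α → Prop) [∀ i, DecidablePred (p i)]
    (s : Multiset α) (hp : ∀ a ∈ s, ∀ i ∈ F, ∀ j ∈ F, p i a → p j a → i = j) :
    s.card = s.countP (fun a ↦ ∀ i ∈ F, ¬ p i a) + ∑ i ∈ F, s.countP (p i) := by
  induction s using Multiset.induction_on with
  | empty => simp
  | cons a s ih =>
    have contribution_eq_one :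
        (if ∀ i ∈ F, ¬ p i a then 1 else 0) + ∑ i ∈ F, (if p i a then 1 else 0) = 1 := by
      by_cases ha : ∀ i ∈ F, ¬ p i a
      · rw [if_pos ha, Finset.sum_eq_zero fun i hi ↦ if_neg (ha i hi), add_zero]
      · obtain ⟨i, hi, hia⟩ : ∃ i ∈ F, p i a := by simpa using ha
        rw [if_neg ha, zero_add, Finset.sum_eq_single_of_mem i hi, if_pos hia]
        exact fun j hj hji ↦
          if_neg fun hja ↦ hji (hp a (Multiset.mem_cons_self a s) j hj i hi hja hia)
    have ih := ih fun b hb ↦ hp b (Multiset.mem_cons_of_mem hb)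
    simp only [Multiset.card_cons, Multiset.countP_cons, Finset.sum_add_distrib]
    lia

lemma cons_le_of_mem_sub [DecidableEq α] {a : α} {s t : Multiset α} (hst : s ≤ t)
    (ha : a ∈ t - s) : a ::ₘ s ≤ t := by
  calc
    a ::ₘ s = {a} + s := (Multiset.singleton_add a s).symm
    _ ≤ (t - s) + s := by gcongr; exact Multiset.singleton_le.2 ha
    _ = t := tsub_add_cancel_of_le hst

end Counting

section Sparse

variable {V : Type*} {k l : ℤ} {Vs : Finset V}

lemma Sparse.of_le {E E' : Multiset (Sym2 V)} (hE : Sparse k l ⟨Vs, E⟩) (hE' : E' ≤ E) :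
    Sparse k l ⟨Vs, E'⟩ :=
  fun H ⟨hverts, hedges, hmem⟩ ↦ hE H ⟨hverts, hedges.trans hE', hmem⟩

lemma sparse_zero (hk : 0 ≤ k) (hl : l ≤ 2 * k) : Sparse k l ⟨Vs, 0⟩ := by
  rintro H ⟨-, hedges, -⟩ hcard
  have card_edges : H.edges.card = 0 := Multiset.card_eq_zero.2 (Multiset.le_zero.1 hedges)
  have two_le_card : (2 : ℤ) ≤ H.verts.card := mod_cast hcard
  have : k * 2 ≤ k * H.verts.card := by gcongr
  rw [card_edges, Nat.cast_zero]
  linarith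

end Sparse

section SpannedCard

variable {V : Type*}

lemma one_lt_card_of_mem_sym2 {e : Sym2 V} {S : Finset V} (he : ¬ e.IsDiag) (heS : e ∈ S.sym2) :
    1 < S.card := by
  induction e using Sym2.ind with
  | _ x y =>
    obtain ⟨hx, hy⟩ := Finset.mk_mem_sym2_iff.1 heS
    exact Finset.one_lt_card.2 ⟨x, hx, y, hy, mt Sym2.mk_isDiag_iff.2 he⟩

variable [DecidableEq V]

/-- The number of edges of `E`, counted with multiplicity, that have both endpoints in `S`. This is
the edge count of the subgraph induced by `S`. -/
def spannedCard (E : Multiset (Sym2 V)) (S : Finset V) : ℕ :=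
  E.countP (· ∈ S.sym2)

lemma mem_sym2_inter {e : Sym2 V} {S T : Finset V} :
    e ∈ (S ∩ T).sym2 ↔ e ∈ S.sym2 ∧ e ∈ T.sym2 := by
  simp only [Finset.mem_sym2_iff, Finset.mem_inter, forall_and]

lemma spannedCard_add_spannedCard_le (E : Multiset (Sym2 V)) (S T : Finset V) :
    spannedCard E S + spannedCard E T ≤ spannedCard E (S ∪ T) + spannedCard E (S ∩ T) := by
  have mem_sym2_union (e : Sym2 V) (he : e ∈ S.sym2 ∨ e ∈ T.sym2) : e ∈ (S ∪ T).sym2 :=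
    he.elim (Finset.sym2_mono Finset.subset_union_left ·)
      (Finset.sym2_mono Finset.subset_union_right ·)
  simp only [spannedCard, Multiset.countP_eq_card_filter, mem_sym2_inter]
  rw [← Multiset.card_add, Multiset.filter_add_filter, Multiset.card_add]
  gcongr
  exact Multiset.monotone_filter_right E mem_sym2_union

end SpannedCard

variable {V : Type*} [DecidableEq V] {k l : ℤ} {Vs S T : Finset V} {E E' B : Multiset (Sym2 V)}

lemma sparse_iff_spannedCard_le :
    Sparse k l ⟨Vs, E⟩ ↔ ∀ S ⊆ Vs, 1 < S.card → (spannedCard E S : ℤ) ≤ k * S.card - l := by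
  simp only [spannedCard, Multiset.countP_eq_card_filter]
  constructor
  · intro h S hS hcard
    exact h ⟨S, E.filter (· ∈ S.sym2)⟩
      ⟨hS, Multiset.filter_le _ _, fun e he ↦ (Multiset.mem_filter.1 he).2⟩ hcard
  · rintro h ⟨S, E'⟩ ⟨hS, hE', hmem⟩ hcard
    have hle : E' ≤ E.filter (· ∈ S.sym2) := Multiset.le_filter.2 ⟨hE', hmem⟩
    calc
      (E'.card : ℤ) ≤ (E.filter (· ∈ S.sym2)).card := mod_cast Multiset.card_le_card hle
      _ ≤ k * S.card - l := h S hS hcard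

/-- `S` is a tight vertex set of `(Vs, E)`: it spans exactly `k |S| - l` edges. For sparse `E` this
says that the subgraph induced by `S` is `Tight`. -/
structure IsTightSet (k l : ℤ) (Vs : Finset V) (E : Multiset (Sym2 V)) (S : Finset V) : Prop where
  subset : S ⊆ Vs
  one_lt_card : 1 < S.card
  spannedCard_eq : (spannedCard E S : ℤ) = k * S.card - l

lemma IsTightSet.union (hE : Sparse k l ⟨Vs, E⟩) (hS : IsTightSet k l Vs E S)
    (hT : IsTightSet k l Vs E T) (hST : 1 < (S ∩ T).card) : IsTightSet k l Vs E (S ∪ T) := by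
  have union_subset : S ∪ T ⊆ Vs := Finset.union_subset hS.subset hT.subset
  have one_lt_card_union : 1 < (S ∪ T).card :=
    hS.one_lt_card.trans_le (Finset.card_le_card Finset.subset_union_left)
  refine ⟨union_subset, one_lt_card_union, ?_⟩
  rw [sparse_iff_spannedCard_le] at hE
  have union_le := hE (S ∪ T) union_subset one_lt_card_union
  have inter_le := hE (S ∩ T) (Finset.inter_subset_left.trans hS.subset) hST
  have supermodular : (spannedCard E S : ℤ) + spannedCard E T ≤
      spannedCard E (S ∪ T) + spannedCard E (S ∩ T) :=
    mod_cast spannedCard_add_spannedCard_le E S T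
  have card_modular : k * (S ∪ T).card + k * (S ∩ T).card = k * S.card + k * T.card := by
    rw [← mul_add, ← mul_add]
    exact congrArg (k * ·) (mod_cast Finset.card_union_add_card_inter S T)
  linarith [hS.spannedCard_eq, hT.spannedCard_eq]

lemma exists_isTightSet_of_not_sparse_cons {e : Sym2 V} (hE : Sparse k l ⟨Vs, E⟩)
    (he : ¬ Sparse k l ⟨Vs, e ::ₘ E⟩) : ∃ S, IsTightSet k l Vs E S ∧ e ∈ S.sym2 := by
  rw [sparse_iff_spannedCard_le] at hE he
  push Not at he
  obtain ⟨S, hS, hcard, hlt⟩ := he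
  have hle := hE S hS hcard
  rw [spannedCard, Multiset.countP_cons, ← spannedCard] at hlt
  split_ifs at hlt with heS
  · exact ⟨S, ⟨hS, hcard, by lia⟩, heS⟩
  · lia

open Classical in
/-- The inclusion-maximal tight vertex sets of `(Vs, E)`. -/
noncomputable def tightComponents (k l : ℤ) (Vs : Finset V) (E : Multiset (Sym2 V)) :
    Finset (Finset V) :=
  Vs.powerset.filter (Maximal (IsTightSet k l Vs E))

lemma mem_tightComponents :
    S ∈ tightComponents k l Vs E ↔ Maximal (IsTightSet k l Vs E) S := by
  simp only [tightComponents, Finset.mem_filter, Finset.mem_powerset, and_iff_right_iff_imp]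
  exact fun hS ↦ hS.prop.subset

lemma IsTightSet.exists_superset_mem_tightComponents (hS : IsTightSet k l Vs E S) :
    ∃ T ∈ tightComponents k l Vs E, S ⊆ T := by
  have finite_tight : {T | IsTightSet k l Vs E T}.Finite :=
    Vs.powerset.finite_toSet.subset fun T hT ↦ Finset.mem_powerset.2 hT.subset
  obtain ⟨T, hST, hT⟩ := finite_tight.exists_le_maximal hS
  exact ⟨T, mem_tightComponents.2 hT, hST⟩

lemma eq_of_mem_tightComponents {e : Sym2 V} (hE : Sparse k l ⟨Vs, E⟩) (he : ¬ e.IsDiag)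
    (hS : S ∈ tightComponents k l Vs E) (hT : T ∈ tightComponents k l Vs E)
    (heS : e ∈ S.sym2) (heT : e ∈ T.sym2) : S = T := by
  rw [mem_tightComponents] at hS hT
  have hST : IsTightSet k l Vs E (S ∪ T) :=
    hS.prop.union hE hT.prop (one_lt_card_of_mem_sym2 he (mem_sym2_inter.2 ⟨heS, heT⟩))
  calc
    S = S ∪ T := hS.eq_of_le hST Finset.subset_union_left
    _ = T := (hT.eq_of_le hST Finset.subset_union_right).symm

/-- `B` is a basis of `E` in the sparsity matroid: a sparse sub-multiset of `E` to which no further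
edge of `E` can be added. -/
structure IsSparseBasis (k l : ℤ) (Vs : Finset V) (E B : Multiset (Sym2 V)) : Prop where
  le : B ≤ E
  sparse : Sparse k l ⟨Vs, B⟩
  not_sparse_cons : ∀ e ∈ E - B, ¬ Sparse k l ⟨Vs, e ::ₘ B⟩

namespace IsSparseBasis

lemma of_maximal (hBE : B ≤ E) (hB : Sparse k l ⟨Vs, B⟩)
    (hmax : ∀ E' ≤ E, Sparse k l ⟨Vs, E'⟩ → B ≤ E' → E' = B) : IsSparseBasis k l Vs E B where
  le := hBE
  sparse := hB
  not_sparse_cons e he hcons :=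
    (Multiset.lt_cons_self B e).ne'
      (hmax _ (cons_le_of_mem_sub hBE he) hcons (Multiset.le_cons_self B e))

lemma exists_mem_tightComponents (hB : IsSparseBasis k l Vs E B) {e : Sym2 V} (he : e ∈ E - B) :
    ∃ S ∈ tightComponents k l Vs B, e ∈ S.sym2 := by
  obtain ⟨S, hS, heS⟩ := exists_isTightSet_of_not_sparse_cons hB.sparse (hB.not_sparse_cons e he)
  obtain ⟨T, hT, hST⟩ := hS.exists_superset_mem_tightComponents
  exact ⟨T, hT, Finset.sym2_mono hST heS⟩

theorem card_le_of_sparse (hloopless : ∀ e ∈ E, ¬ e.IsDiag) (hB : IsSparseBasis k l Vs E B)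
    (hE'E : E' ≤ E) (hE' : Sparse k l ⟨Vs, E'⟩) : E'.card ≤ B.card := by
  let F := tightComponents k l Vs B
  let IsUncovered (e : Sym2 V) : Prop := ∀ S ∈ F, e ∉ S.sym2
  have card_eq {D : Multiset (Sym2 V)} (hD : D ≤ E) :
      D.card = D.countP IsUncovered + ∑ S ∈ F, spannedCard D S :=
    card_eq_countP_add_sum_countP F (fun S e ↦ e ∈ S.sym2) D fun e he _ hS _ hT ↦
      eq_of_mem_tightComponents hB.sparse (hloopless e (Multiset.mem_of_le hD he)) hS hT
  have uncovered_le : E'.countP IsUncovered ≤ B.countP IsUncovered := by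
    have sub_covered : (E - B).countP IsUncovered = 0 := by
      refine Multiset.countP_eq_zero.2 fun e he huncovered ↦ ?_
      obtain ⟨S, hS, heS⟩ := hB.exists_mem_tightComponents he
      exact huncovered S hS heS
    calc
      E'.countP IsUncovered ≤ E.countP IsUncovered := Multiset.countP_le_of_le _ hE'E
      _ = (E - B + B).countP IsUncovered := by rw [tsub_add_cancel_of_le hB.le]
      _ = B.countP IsUncovered := by rw [Multiset.countP_add, sub_covered, zero_add]
  have spannedCard_le : ∀ S ∈ F, spannedCard E' S ≤ spannedCard B S := by
    intro S hS
    have hS : IsTightSet k l Vs B S := (mem_tightComponents.1 hS).prop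
    have := sparse_iff_spannedCard_le.1 hE' S hS.subset hS.one_lt_card
    exact_mod_cast this.trans_eq hS.spannedCard_eq.symm
  rw [card_eq hE'E, card_eq hB.le]
  exact add_le_add uncovered_le (Finset.sum_le_sum spannedCard_le)

theorem isLeast_card_sub (hloopless : ∀ e ∈ E, ¬ e.IsDiag) (hB : IsSparseBasis k l Vs E B) :
    IsLeast {n | ∃ F ≤ E, Sparse k l ⟨Vs, E - F⟩ ∧ F.card = n} (E.card - B.card) := by
  constructor
  · refine ⟨E - B, tsub_le_self, ?_, Multiset.card_sub hB.le⟩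
    rw [tsub_tsub_cancel_of_le hB.le]
    exact hB.sparse
  · rintro _ ⟨F, hF, hsparse, rfl⟩
    have : (E - F).card ≤ B.card := hB.card_le_of_sparse hloopless tsub_le_self hsparse
    rw [Multiset.card_sub hF] at this
    lia

end IsSparseBasis

open Classical in
lemma addEdges_concat (L : List (Sym2 V)) (e : Sym2 V) :
    addEdges k l Vs (L ++ [e]) =
      if Sparse k l ⟨Vs, e ::ₘ addEdges k l Vs L⟩ then e ::ₘ addEdges k l Vs L
      else addEdges k l Vs L := by
  rw [addEdges, addEdges, List.foldl_append]
  rfl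

theorem isSparseBasis_addEdges (h₀ : Sparse k l ⟨Vs, 0⟩) (L : List (Sym2 V)) :
    IsSparseBasis k l Vs L (addEdges k l Vs L) := by
  induction L using List.reverseRecOn with
  | nil => exact ⟨le_rfl, h₀, by simp⟩
  | append_singleton L e ih =>
    have coe_concat : ((L ++ [e] : List (Sym2 V)) : Multiset (Sym2 V)) = e ::ₘ (L : Multiset _) :=
      Multiset.coe_eq_coe.2 (List.perm_append_singleton e L)
    rw [addEdges_concat, coe_concat]
    split_ifs with he
    · refine ⟨Multiset.cons_le_cons e ih.le, he, fun f hf hsparse ↦ ?_⟩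
      rw [Multiset.sub_cons, Multiset.erase_cons_head] at hf
      exact ih.not_sparse_cons f hf
        (hsparse.of_le (Multiset.cons_le_cons f (Multiset.le_cons_self _ e)))
    · refine ⟨ih.le.trans (Multiset.le_cons_self _ e), ih.sparse, fun f hf ↦ ?_⟩
      rw [Multiset.cons_sub_of_le e ih.le] at hf
      obtain rfl | hf := Multiset.mem_cons.1 hf
      · exact he
      · exact ih.not_sparse_cons f hf

end MG

theorem maximal_sparse_card_unique_general {V : Type*} [DecidableEq V] (k l : ℤ) (G : MG V)
    (hloopless : ∀ e ∈ G.edges, ¬ e.IsDiag) (h₀ : MG.Sparse k l (⟨G.verts, 0⟩ : MG V)) :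
    (∀ E₁ E₂ : Multiset (Sym2 V),
      E₁ ≤ G.edges → MG.Sparse k l (⟨G.verts, E₁⟩ : MG V) →
      (∀ E' : Multiset (Sym2 V), E' ≤ G.edges →
        MG.Sparse k l (⟨G.verts, E'⟩ : MG V) → E₁ ≤ E' → E' = E₁) →
      E₂ ≤ G.edges → MG.Sparse k l (⟨G.verts, E₂⟩ : MG V) →
      (∀ E' : Multiset (Sym2 V), E' ≤ G.edges →
        MG.Sparse k l (⟨G.verts, E'⟩ : MG V) → E₂ ≤ E' → E' = E₂) →
      Multiset.card E₁ = Multiset.card E₂) ∧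
    (∀ L : List (Sym2 V), (L : Multiset (Sym2 V)) = G.edges →
      Multiset.card G.edges - Multiset.card (addEdges k l G.verts L) =
        sInf {n : ℕ | ∃ F : Multiset (Sym2 V), F ≤ G.edges ∧
          MG.Sparse k l (⟨G.verts, G.edges - F⟩ : MG V) ∧ Multiset.card F = n}) := by
  refine ⟨fun E₁ E₂ hle₁ hsparse₁ hmax₁ hle₂ hsparse₂ hmax₂ ↦ ?_, fun L hL ↦ ?_⟩
  · have basis₁ := MG.IsSparseBasis.of_maximal hle₁ hsparse₁ hmax₁
    have basis₂ := MG.IsSparseBasis.of_maximal hle₂ hsparse₂ hmax₂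
    exact le_antisymm (basis₂.card_le_of_sparse hloopless hle₁ hsparse₁)
      (basis₁.card_le_of_sparse hloopless hle₂ hsparse₂)
  · have basis : MG.IsSparseBasis k l G.verts G.edges (addEdges k l G.verts L) :=
      hL ▸ MG.isSparseBasis_addEdges h₀ L
    exact (basis.isLeast_card_sub hloopless).csInf_eq.symm

/-- Any two maximal `(k,l)`-sparse sub-multisets of the edges of `G` have
the same cardinality; consequently, adding the edges one at a time in any order and
discarding an edge exactly when its addition creates a `(k,l)`-redundant subgraph, the
number of discarded edges is independent of the order of addition and equals the minimum
cardinality of a set `F` of edges such that `(V, E ∖ F)` is `(k,l)`-sparse. -/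
theorem maximal_sparse_card_unique {V : Type*} [DecidableEq V] (k l : ℤ)
    (hk : 1 ≤ k) (hl0 : 0 ≤ l) (hl : l ≤ 2 * k - 1)
    (G : MG V) (hWF : G.WF) :
    (∀ E₁ E₂ : Multiset (Sym2 V),
      E₁ ≤ G.edges → MG.Sparse k l (⟨G.verts, E₁⟩ : MG V) →
      (∀ E' : Multiset (Sym2 V), E' ≤ G.edges →
        MG.Sparse k l (⟨G.verts, E'⟩ : MG V) → E₁ ≤ E' → E' = E₁) →
      E₂ ≤ G.edges → MG.Sparse k l (⟨G.verts, E₂⟩ : MG V) →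
      (∀ E' : Multiset (Sym2 V), E' ≤ G.edges →
        MG.Sparse k l (⟨G.verts, E'⟩ : MG V) → E₂ ≤ E' → E' = E₂) →
      Multiset.card E₁ = Multiset.card E₂) ∧
    (∀ L : List (Sym2 V), (L : Multiset (Sym2 V)) = G.edges →
      Multiset.card G.edges - Multiset.card (addEdges k l G.verts L) =
        sInf {n : ℕ | ∃ F : Multiset (Sym2 V), F ≤ G.edges ∧
          MG.Sparse k l (⟨G.verts, G.edges - F⟩ : MG V) ∧ Multiset.card F = n}) :=
  maximal_sparse_card_unique_general k l G hWF.1 (MG.sparse_zero (by lia) (by lia))
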